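/- Mutual information nonnegativity: Let ρ be a density matrix on ℂ^d ⊗ ℂ^e (positive semidefinite, trace 1) with partial traces ρ_1 = Tr_2 ρ and ρ_2 = Tr_1 ρ. Then S(ρ_1) + S(ρ_2) − S(ρ) ≥ 0, where S(ρ) = −Tr(ρ log ρ) is the von Neumann entropy, with equality if and only if ρ = ρ_1 ⊗ ρ_2. -/

import Mathlib

open Matrix
open scoped ComplexOrder

noncomputable def vnEntropy {ι : Type*} [Fintype ι] [DecidableEq ι] {ρ : Matrix ι ι ℂ}
    (hρ : ρ.IsHermitian) : ℝ :=
  - ∑ i, hρ.eigenvalues i * Real.log (hρ.eigenvalues i)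

noncomputable def ptrace2 {d e : ℕ} (ρ : Matrix (Fin d × Fin e) (Fin d × Fin e) ℂ) :
    Matrix (Fin d) (Fin d) ℂ := fun a b => ∑ x, ρ (a, x) (b, x)

noncomputable def ptrace1 {d e : ℕ} (ρ : Matrix (Fin d × Fin e) (Fin d × Fin e) ℂ) :
    Matrix (Fin e) (Fin e) ℂ := fun x y => ∑ a, ρ (a, x) (a, y)

/-!
The quantity `S(ρ₁) + S(ρ₂) - S(ρ)` is the relative entropy `D(ρ‖ρ₁ ⊗ ρ₂)`, so the theorem is an
instance of Klein's inequality `tr ρ - tr σ ≤ D(ρ‖σ)`, with equality only for `ρ = σ`. If `pᵢ, uᵢ`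
and `sₖ, vₖ` are the eigenvalues and eigenvectors of `ρ` and `σ`, then
`tr (f(ρ) g(σ)) = ∑ᵢₖ |⟨uᵢ, vₖ⟩|² f(pᵢ) g(sₖ)`, which reduces Klein's inequality to the scalar
inequality `p - s ≤ p (log p - log s)` for each pair of eigenvalues. The eigenvalues of `ρ₁ ⊗ ρ₂`
may vanish; there one needs that `ρ` is supported on the tensor product of the supports of `ρ₁`
and `ρ₂`. This holds because a positive semidefinite `ρ` with `tr (ρ X Xᴴ) = 0` satisfies `ρ X = 0`.
-/

open scoped Kronecker

variable {m n R 𝕜 : Type*} [RCLike 𝕜]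

section FunctionalCalculus

variable [Fintype n] [DecidableEq n] {A : Matrix n n 𝕜}

lemma continuousOn_real_spectrum (f : ℝ → ℝ) : ContinuousOn f (spectrum ℝ A) :=
  A.finite_real_spectrum.continuousOn f

lemma cfc_eq_eigenvectorUnitary_mul (hA : A.IsHermitian) (f : ℝ → ℝ) :
    cfc f A = (hA.eigenvectorUnitary : Matrix n n 𝕜) *
      diagonal (fun i ↦ (f (hA.eigenvalues i) : 𝕜)) * (hA.eigenvectorUnitary : Matrix n n 𝕜)ᴴ :=
  hA.cfc_eq f

lemma cfc_id_mul (hA : A.IsHermitian) (f : ℝ → ℝ) : cfc (fun x ↦ x * f x) A = A * cfc f A := by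
  rw [cfc_mul _ _ A (continuousOn_real_spectrum _) (continuousOn_real_spectrum _),
    cfc_id' ℝ A hA.isSelfAdjoint]

lemma trace_cfc (hA : A.IsHermitian) (f : ℝ → ℝ) :
    (cfc f A).trace = ∑ i, (f (hA.eigenvalues i) : 𝕜) := by
  rw [cfc_eq_eigenvectorUnitary_mul hA, trace_mul_comm, ← Matrix.mul_assoc,
    ← star_eq_conjTranspose, Unitary.coe_star_mul_self, Matrix.one_mul, trace_diagonal]

lemma conjTranspose_eigenvectorUnitary_mul (hA : A.IsHermitian) :
    (hA.eigenvectorUnitary : Matrix n n 𝕜)ᴴ * A =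
      diagonal (fun i ↦ (hA.eigenvalues i : 𝕜)) * (hA.eigenvectorUnitary : Matrix n n 𝕜)ᴴ := by
  set U := (hA.eigenvectorUnitary : Matrix n n 𝕜) with hU
  set D := diagonal (fun i ↦ (hA.eigenvalues i : 𝕜)) with hD
  have hspectral : A = U * D * Uᴴ := by
    rw [hU, hD, ← cfc_eq_eigenvectorUnitary_mul hA fun x ↦ x, cfc_id' ℝ A hA.isSelfAdjoint]
  have hUU : Uᴴ * U = 1 := Unitary.coe_star_mul_self _
  calc Uᴴ * A = Uᴴ * (U * D * Uᴴ) := congr(Uᴴ * $hspectral)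
    _ = D * Uᴴ := by rw [← Matrix.mul_assoc, ← Matrix.mul_assoc, hUU, Matrix.one_mul]

lemma cfc_mul_eq_mul_diagonal [Fintype m] [DecidableEq m] (hA : A.IsHermitian)
    {U : Matrix n m 𝕜} {s : m → ℝ} (hU : A * U = U * diagonal (fun k ↦ (s k : 𝕜))) (f : ℝ → ℝ) :
    cfc f A * U = U * diagonal (fun k ↦ (f (s k) : 𝕜)) := by
  set E := (hA.eigenvectorUnitary : Matrix n n 𝕜) with hE
  have hEE : E * Eᴴ = 1 := Unitary.coe_mul_star_self _
  have hT : diagonal (fun i ↦ (hA.eigenvalues i : 𝕜)) * (Eᴴ * U) =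
      Eᴴ * U * diagonal (fun k ↦ (s k : 𝕜)) := by
    rw [← Matrix.mul_assoc, ← conjTranspose_eigenvectorUnitary_mul hA, Matrix.mul_assoc, hU,
      Matrix.mul_assoc]
  have hfT : diagonal (fun i ↦ (f (hA.eigenvalues i) : 𝕜)) * (Eᴴ * U) =
      Eᴴ * U * diagonal (fun k ↦ (f (s k) : 𝕜)) := by
    ext i k
    have hik := congr_fun₂ hT i k
    rw [diagonal_mul, mul_diagonal, mul_comm] at hik ⊢
    obtain h | h := eq_or_ne ((Eᴴ * U) i k) 0
    · simp only [h, zero_mul]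
    · rw [RCLike.ofReal_injective (mul_left_cancel₀ h hik)]
  rw [cfc_eq_eigenvectorUnitary_mul hA, ← hE, Matrix.mul_assoc, Matrix.mul_assoc, hfT,
    ← Matrix.mul_assoc, ← Matrix.mul_assoc, hEE, Matrix.one_mul]

lemma cfc_mul_eigenvectorUnitary (hA : A.IsHermitian) (f : ℝ → ℝ) :
    cfc f A * (hA.eigenvectorUnitary : Matrix n n 𝕜) =
      hA.eigenvectorUnitary * diagonal (fun i ↦ (f (hA.eigenvalues i) : 𝕜)) := by
  rw [cfc_eq_eigenvectorUnitary_mul hA, Matrix.mul_assoc, ← star_eq_conjTranspose,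
    Unitary.coe_star_mul_self, Matrix.mul_one]

/-- The projection onto the range of a Hermitian matrix; as `0⁻¹ = 0`, the function `x⁻¹ * x`
vanishes at `0` and is `1` elsewhere. -/
noncomputable def supportProj (A : Matrix n n 𝕜) : Matrix n n 𝕜 := cfc (fun x : ℝ ↦ x⁻¹ * x) A

lemma mul_supportProj (hA : A.IsHermitian) : A * supportProj A = A := by
  rw [supportProj, ← cfc_id_mul hA]
  simp only [← mul_assoc, mul_inv_mul_cancel]
  exact cfc_id' ℝ A hA.isSelfAdjoint

end FunctionalCalculus

section Kronecker

lemma isHermitian_kronecker [CommMagma R] [StarMul R] {A : Matrix m m R} {B : Matrix n n R}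
    (hA : A.IsHermitian) (hB : B.IsHermitian) : (A ⊗ₖ B).IsHermitian := by
  rw [IsHermitian, conjTranspose_kronecker, hA.eq, hB.eq]

variable [Fintype m] [DecidableEq m] [Fintype n] [DecidableEq n]
  {A : Matrix m m 𝕜} {B : Matrix n n 𝕜}

lemma cfc_kronecker_eq_sum (hA : A.IsHermitian) (hB : B.IsHermitian) {ι : Type*} {t : Finset ι}
    {h : ℝ → ℝ} {f g : ι → ℝ → ℝ} (hfg : ∀ x y, h (x * y) = ∑ j ∈ t, f j x * g j y) :
    cfc h (A ⊗ₖ B) = ∑ j ∈ t, cfc (f j) A ⊗ₖ cfc (g j) B := by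
  set V := (hA.eigenvectorUnitary : Matrix m m 𝕜) with hV
  set W := (hB.eigenvectorUnitary : Matrix n n 𝕜) with hW
  have hVW : (V ⊗ₖ W) * (V ⊗ₖ W)ᴴ = 1 :=
    Unitary.mul_star_self_of_mem
      (kronecker_mem_unitary hA.eigenvectorUnitary.2 hB.eigenvectorUnitary.2)
  have hcfc (f g : ℝ → ℝ) : (cfc f A ⊗ₖ cfc g B) * (V ⊗ₖ W) = (V ⊗ₖ W) *
      diagonal (fun k ↦ ((f (hA.eigenvalues k.1) * g (hB.eigenvalues k.2) : ℝ) : 𝕜)) := by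
    rw [← mul_kronecker_mul, cfc_mul_eigenvectorUnitary hA, cfc_mul_eigenvectorUnitary hB,
      mul_kronecker_mul, diagonal_kronecker_diagonal]
    simp only [RCLike.ofReal_mul, hV, hW]
  have hAB := hcfc (fun x ↦ x) (fun x ↦ x)
  rw [cfc_id' ℝ A hA.isSelfAdjoint, cfc_id' ℝ B hB.isSelfAdjoint] at hAB
  have hmul : cfc h (A ⊗ₖ B) * (V ⊗ₖ W) = (∑ j ∈ t, cfc (f j) A ⊗ₖ cfc (g j) B) * (V ⊗ₖ W) := by
    rw [cfc_mul_eq_mul_diagonal (isHermitian_kronecker hA hB) hAB, Finset.sum_mul]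
    simp only [hcfc, hfg, ← Finset.mul_sum]
    congr 1
    ext i j
    simp [Matrix.sum_apply, diagonal_apply]
  simpa only [Matrix.mul_assoc, hVW, Matrix.mul_one] using congr($hmul * (V ⊗ₖ W)ᴴ)

lemma supportProj_kronecker (hA : A.IsHermitian) (hB : B.IsHermitian) :
    supportProj (A ⊗ₖ B) = supportProj A ⊗ₖ supportProj B := by
  simpa using! cfc_kronecker_eq_sum hA hB (t := {()}) (f := fun _ x ↦ x⁻¹ * x)
    (g := fun _ y ↦ y⁻¹ * y) (fun x y ↦ by simp [mul_mul_mul_comm, mul_comm])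

lemma cfc_log_kronecker (hA : A.IsHermitian) (hB : B.IsHermitian) :
    cfc Real.log (A ⊗ₖ B) = cfc Real.log A ⊗ₖ supportProj B + supportProj A ⊗ₖ cfc Real.log B := by
  have hlog (x y : ℝ) : Real.log (x * y) = Real.log x * (y⁻¹ * y) + x⁻¹ * x * Real.log y := by
    obtain rfl | hx := eq_or_ne x 0
    · simp
    obtain rfl | hy := eq_or_ne y 0
    · simp
    rw [Real.log_mul hx hy, inv_mul_cancel₀ hx, inv_mul_cancel₀ hy, mul_one, one_mul]
  simpa using! cfc_kronecker_eq_sum hA hB (t := Finset.univ (α := Fin 2))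
    (f := ![Real.log, fun x ↦ x⁻¹ * x]) (g := ![fun x ↦ x⁻¹ * x, Real.log])
    (fun x y ↦ by simp [hlog])

end Kronecker

section PartialTrace

/-- The partial trace over the second tensor factor. -/
def partialTraceRight [Fintype n] [AddCommMonoid R] (ρ : Matrix (m × n) (m × n) R) :
    Matrix m m R :=
  of fun a b ↦ ∑ x, ρ (a, x) (b, x)

/-- The partial trace over the first tensor factor. -/
def partialTraceLeft [Fintype m] [AddCommMonoid R] (ρ : Matrix (m × n) (m × n) R) :
    Matrix n n R :=
  of fun x y ↦ ∑ a, ρ (a, x) (a, y)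

lemma trace_partialTraceRight [Fintype m] [Fintype n] [AddCommMonoid R]
    (ρ : Matrix (m × n) (m × n) R) : (partialTraceRight ρ).trace = ρ.trace := by
  simp only [trace, diag_apply, partialTraceRight, of_apply, Fintype.sum_prod_type]

lemma trace_partialTraceLeft [Fintype m] [Fintype n] [AddCommMonoid R]
    (ρ : Matrix (m × n) (m × n) R) : (partialTraceLeft ρ).trace = ρ.trace := by
  simp only [trace, diag_apply, partialTraceLeft, of_apply, Fintype.sum_prod_type_right]

lemma trace_mul_kronecker_one [Fintype m] [Fintype n] [DecidableEq n] [NonAssocSemiring R]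
    (ρ : Matrix (m × n) (m × n) R) (A : Matrix m m R) :
    (ρ * (A ⊗ₖ (1 : Matrix n n R))).trace = (partialTraceRight ρ * A).trace := by
  simp only [trace, diag_apply, Matrix.mul_apply, Fintype.sum_prod_type, partialTraceRight,
    of_apply, kronecker_apply, one_apply, mul_ite, mul_one, mul_zero, Finset.sum_ite_eq',
    Finset.mem_univ, if_true, Finset.sum_mul]
  exact Finset.sum_congr rfl fun a _ ↦ Finset.sum_comm

lemma trace_mul_one_kronecker [Fintype m] [DecidableEq m] [Fintype n] [NonAssocSemiring R]
    (ρ : Matrix (m × n) (m × n) R) (B : Matrix n n R) :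
    (ρ * ((1 : Matrix m m R) ⊗ₖ B)).trace = (partialTraceLeft ρ * B).trace := by
  simp only [trace, diag_apply, Matrix.mul_apply, Fintype.sum_prod_type_right, partialTraceLeft,
    of_apply, kronecker_apply, one_apply, ite_mul, one_mul, zero_mul, mul_ite, mul_zero,
    Finset.sum_ite_eq', Finset.mem_univ, if_true, Finset.sum_mul]
  exact Finset.sum_congr rfl fun a _ ↦ Finset.sum_comm

variable {ρ : Matrix (m × n) (m × n) 𝕜}

lemma posSemidef_partialTraceRight [Fintype n] (hρ : ρ.PosSemidef) :
    (partialTraceRight ρ).PosSemidef := by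
  have hsum : partialTraceRight ρ = ∑ x, ρ.submatrix (·, x) (·, x) := by
    ext a b
    simp only [partialTraceRight, of_apply, Matrix.sum_apply, submatrix_apply]
  exact hsum ▸ posSemidef_sum _ fun x _ ↦ hρ.submatrix _

lemma posSemidef_partialTraceLeft [Fintype m] (hρ : ρ.PosSemidef) :
    (partialTraceLeft ρ).PosSemidef := by
  have hsum : partialTraceLeft ρ = ∑ a, ρ.submatrix (a, ·) (a, ·) := by
    ext x y
    simp only [partialTraceLeft, of_apply, Matrix.sum_apply, submatrix_apply]
  exact hsum ▸ posSemidef_sum _ fun a _ ↦ hρ.submatrix _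

open scoped MatrixOrder Matrix.Norms.L2Operator in
lemma mul_eq_zero_of_trace_mul_mul_conjTranspose_eq_zero [Fintype m] [Fintype n]
    {A : Matrix n n 𝕜} (hA : A.PosSemidef) {X : Matrix n m 𝕜} (hX : (A * (X * Xᴴ)).trace = 0) :
    A * X = 0 := by
  classical
  obtain ⟨C, rfl⟩ := CStarAlgebra.nonneg_iff_eq_star_mul_self.mp hA.nonneg
  rw [star_eq_conjTranspose] at hX ⊢
  have hCX : C * X = 0 := by
    rw [← trace_conjTranspose_mul_self_eq_zero_iff, ← hX, conjTranspose_mul, Matrix.mul_assoc,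
      trace_mul_comm]
    simp only [Matrix.mul_assoc]
  rw [Matrix.mul_assoc, hCX, Matrix.mul_zero]

variable [Fintype m] [Fintype n]

lemma mul_kronecker_one_eq_zero [DecidableEq n] (hρ : ρ.PosSemidef) {X : Matrix m m 𝕜}
    (hX : partialTraceRight ρ * X = 0) : ρ * (X ⊗ₖ (1 : Matrix n n 𝕜)) = 0 := by
  apply mul_eq_zero_of_trace_mul_mul_conjTranspose_eq_zero hρ
  rw [conjTranspose_kronecker, ← mul_kronecker_mul, conjTranspose_one, Matrix.mul_one,
    trace_mul_kronecker_one, ← Matrix.mul_assoc, hX, Matrix.zero_mul, trace_zero]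

lemma mul_one_kronecker_eq_zero [DecidableEq m] (hρ : ρ.PosSemidef) {Y : Matrix n n 𝕜}
    (hY : partialTraceLeft ρ * Y = 0) : ρ * ((1 : Matrix m m 𝕜) ⊗ₖ Y) = 0 := by
  apply mul_eq_zero_of_trace_mul_mul_conjTranspose_eq_zero hρ
  rw [conjTranspose_kronecker, ← mul_kronecker_mul, conjTranspose_one, Matrix.mul_one,
    trace_mul_one_kronecker, ← Matrix.mul_assoc, hY, Matrix.zero_mul, trace_zero]

variable [DecidableEq m] [DecidableEq n]

lemma mul_supportProj_partialTraceRight_kronecker_one (hρ : ρ.PosSemidef) :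
    ρ * (supportProj (partialTraceRight ρ) ⊗ₖ (1 : Matrix n n 𝕜)) = ρ := by
  set P := supportProj (partialTraceRight ρ)
  have hP : partialTraceRight ρ * (P - 1) = 0 := by
    rw [Matrix.mul_sub, mul_supportProj (posSemidef_partialTraceRight hρ).isHermitian,
      Matrix.mul_one, sub_self]
  calc ρ * (P ⊗ₖ (1 : Matrix n n 𝕜)) = ρ * ((P - 1) ⊗ₖ (1 : Matrix n n 𝕜)) + ρ * (1 ⊗ₖ 1) := by
        rw [← Matrix.mul_add, ← add_kronecker, sub_add_cancel]
    _ = ρ := by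
        rw [mul_kronecker_one_eq_zero hρ hP, one_kronecker_one, Matrix.mul_one, zero_add]

lemma mul_one_kronecker_supportProj_partialTraceLeft (hρ : ρ.PosSemidef) :
    ρ * ((1 : Matrix m m 𝕜) ⊗ₖ supportProj (partialTraceLeft ρ)) = ρ := by
  set Q := supportProj (partialTraceLeft ρ)
  have hQ : partialTraceLeft ρ * (Q - 1) = 0 := by
    rw [Matrix.mul_sub, mul_supportProj (posSemidef_partialTraceLeft hρ).isHermitian,
      Matrix.mul_one, sub_self]
  calc ρ * ((1 : Matrix m m 𝕜) ⊗ₖ Q) = ρ * ((1 : Matrix m m 𝕜) ⊗ₖ (Q - 1)) + ρ * (1 ⊗ₖ 1) := by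
        rw [← Matrix.mul_add, ← kronecker_add, sub_add_cancel]
    _ = ρ := by
        rw [mul_one_kronecker_eq_zero hρ hQ, one_kronecker_one, Matrix.mul_one, zero_add]

lemma mul_supportProj_kronecker_partialTrace (hρ : ρ.PosSemidef) :
    ρ * supportProj (partialTraceRight ρ ⊗ₖ partialTraceLeft ρ) = ρ := by
  rw [supportProj_kronecker (posSemidef_partialTraceRight hρ).isHermitian
    (posSemidef_partialTraceLeft hρ).isHermitian,
    ← Matrix.mul_one (supportProj (partialTraceRight ρ)),
    ← Matrix.one_mul (supportProj (partialTraceLeft ρ)), mul_kronecker_mul, ← Matrix.mul_assoc,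
    mul_supportProj_partialTraceRight_kronecker_one hρ,
    mul_one_kronecker_supportProj_partialTraceLeft hρ]

end PartialTrace

section RelativeEntropy

variable [Fintype n] [DecidableEq n]

/-- The matrix of transition probabilities between the eigenbases of two Hermitian matrices,
rows indexed by the eigenvectors of `A` and columns by those of `B`. -/
noncomputable def eigenOverlap {A B : Matrix n n 𝕜} (hA : A.IsHermitian) (hB : B.IsHermitian)
    (i k : n) : ℝ :=
  ‖((hA.eigenvectorUnitary : Matrix n n 𝕜)ᴴ * (hB.eigenvectorUnitary : Matrix n n 𝕜)) i k‖ ^ 2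

lemma eigenOverlap_nonneg {A B : Matrix n n 𝕜} (hA : A.IsHermitian) (hB : B.IsHermitian)
    (i k : n) : 0 ≤ eigenOverlap hA hB i k :=
  sq_nonneg _

lemma trace_cfc_mul_cfc {A B : Matrix n n 𝕜} (hA : A.IsHermitian) (hB : B.IsHermitian)
    (f g : ℝ → ℝ) :
    (cfc f A * cfc g B).trace = ((∑ i, ∑ k, eigenOverlap hA hB i k *
      (f (hA.eigenvalues i) * g (hB.eigenvalues k)) : ℝ) : 𝕜) := by
  set U := (hA.eigenvectorUnitary : Matrix n n 𝕜)
  set T := Uᴴ * (hB.eigenvectorUnitary : Matrix n n 𝕜) with hT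
  set F := diagonal (fun i ↦ (f (hA.eigenvalues i) : 𝕜))
  set G := diagonal (fun k ↦ (g (hB.eigenvalues k) : 𝕜))
  have htrace : (cfc f A * cfc g B).trace = (F * T * (G * Tᴴ)).trace := by
    rw [cfc_eq_eigenvectorUnitary_mul hA, cfc_eq_eigenvectorUnitary_mul hB, Matrix.mul_assoc U,
      Matrix.mul_assoc U, trace_mul_comm U, hT, conjTranspose_mul, conjTranspose_conjTranspose]
    simp only [Matrix.mul_assoc, U, F, G]
  rw [htrace, RCLike.ofReal_sum]
  refine Finset.sum_congr rfl fun i _ ↦ ?_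
  rw [diag_apply, Matrix.mul_apply, RCLike.ofReal_sum]
  refine Finset.sum_congr rfl fun k _ ↦ ?_
  have hoverlap : T i k * star (T i k) = (eigenOverlap hA hB i k : 𝕜) := by
    rw [eigenOverlap, RCLike.ofReal_pow]
    exact RCLike.mul_conj _
  rw [diagonal_mul, diagonal_mul, conjTranspose_apply, RCLike.ofReal_mul, RCLike.ofReal_mul,
    ← hoverlap]
  ring

lemma eq_of_eigenOverlap_eq_zero_or_eigenvalues_eq {A B : Matrix n n 𝕜} (hA : A.IsHermitian)
    (hB : B.IsHermitian)
    (h : ∀ i k, eigenOverlap hA hB i k = 0 ∨ hA.eigenvalues i = hB.eigenvalues k) : A = B := by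
  set U := (hA.eigenvectorUnitary : Matrix n n 𝕜) with hU
  set V := (hB.eigenvectorUnitary : Matrix n n 𝕜) with hV
  have hUU : U * Uᴴ = 1 := Unitary.coe_mul_star_self _
  have hVV : V * Vᴴ = 1 := Unitary.coe_mul_star_self _
  have hBV : B * V = V * diagonal (fun k ↦ (hB.eigenvalues k : 𝕜)) := by
    simpa only [cfc_id' ℝ B hB.isSelfAdjoint] using cfc_mul_eigenvectorUnitary hB fun x ↦ x
  have hUV : Uᴴ * A * V = Uᴴ * B * V := by
    rw [conjTranspose_eigenvectorUnitary_mul hA, ← hU, Matrix.mul_assoc, Matrix.mul_assoc Uᴴ B,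
      hBV, ← Matrix.mul_assoc Uᴴ]
    ext i k
    rw [diagonal_mul, mul_diagonal, mul_comm]
    obtain hik | hik := h i k
    · rw [eigenOverlap, sq_eq_zero_iff, norm_eq_zero, ← hU, ← hV] at hik
      rw [hik, zero_mul, zero_mul]
    · rw [hik]
  calc A = U * (Uᴴ * A * V) * Vᴴ := by
        rw [Matrix.mul_assoc, Matrix.mul_assoc (Uᴴ * A), hVV, Matrix.mul_one, ← Matrix.mul_assoc,
          hUU, Matrix.one_mul]
    _ = U * (Uᴴ * B * V) * Vᴴ := by rw [hUV]
    _ = B := by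
        rw [Matrix.mul_assoc, Matrix.mul_assoc (Uᴴ * B), hVV, Matrix.mul_one, ← Matrix.mul_assoc,
          hUU, Matrix.one_mul]

lemma mul_log_sub_log_sub_eq_mul_klFun {p s : ℝ} (h : s = 0 → p = 0) :
    p * (Real.log p - Real.log s) - (p - s) = s * InformationTheory.klFun (p / s) := by
  obtain rfl | hs := eq_or_ne s 0
  · simp [h rfl]
  obtain rfl | hp := eq_or_ne p 0
  · simp [InformationTheory.klFun_zero]
  rw [InformationTheory.klFun_apply, Real.log_div hp hs]
  field_simp
  ring

/-- The quantum relative entropy `D(ρ‖σ) = tr ρ (log ρ - log σ)`. As `log 0 = 0`, it has its usual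
meaning only if the support of `ρ` lies in that of `σ`, that is, if `ρ * supportProj σ = ρ`. -/
noncomputable def relEntropy (ρ σ : Matrix n n 𝕜) : ℝ :=
  RCLike.re (ρ * (cfc Real.log ρ - cfc Real.log σ)).trace

variable {ρ σ : Matrix n n 𝕜}

lemma relEntropy_self (ρ : Matrix n n 𝕜) : relEntropy ρ ρ = 0 := by
  rw [relEntropy, sub_self, Matrix.mul_zero, trace_zero, map_zero]

lemma eigenOverlap_mul_eigenvalues_eq_zero (hρ : ρ.IsHermitian) (hσ : σ.IsHermitian)
    (hsupp : ρ * supportProj σ = ρ) (i : n) {k : n} (hk : hσ.eigenvalues k = 0) :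
    eigenOverlap hρ hσ i k * hρ.eigenvalues i = 0 := by
  set U := (hρ.eigenvectorUnitary : Matrix n n 𝕜) with hU
  set V := (hσ.eigenvectorUnitary : Matrix n n 𝕜) with hV
  have hentry : (Uᴴ * ρ * V) i k = hρ.eigenvalues i * (Uᴴ * V) i k := by
    rw [conjTranspose_eigenvectorUnitary_mul hρ, ← hU, Matrix.mul_assoc, diagonal_mul]
  have hentry_zero : (Uᴴ * ρ * V) i k = 0 := by
    rw [← hsupp, supportProj, Matrix.mul_assoc, Matrix.mul_assoc ρ, cfc_mul_eigenvectorUnitary hσ,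
      ← Matrix.mul_assoc, ← Matrix.mul_assoc, mul_diagonal, hk, mul_zero, RCLike.ofReal_zero,
      mul_zero]
  obtain hp | hT := mul_eq_zero.mp (hentry.symm.trans hentry_zero)
  · rw [RCLike.ofReal_eq_zero.mp hp, mul_zero]
  · rw [eigenOverlap, ← hU, ← hV, hT, norm_zero, zero_pow two_ne_zero, zero_mul]

lemma relEntropy_sub_eq_sum (hρ : ρ.IsHermitian) (hσ : σ.IsHermitian)
    (hsupp : ρ * supportProj σ = ρ) :
    relEntropy ρ σ - (RCLike.re ρ.trace - RCLike.re σ.trace) =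
      ∑ i, ∑ k, eigenOverlap hρ hσ i k * (hσ.eigenvalues k *
        InformationTheory.klFun (hρ.eigenvalues i / hσ.eigenvalues k)) := by
  have htrace (f g : ℝ → ℝ) := congr(RCLike.re $(trace_cfc_mul_cfc hρ hσ f g))
  simp only [RCLike.ofReal_re] at htrace
  have hentropy := htrace (fun x ↦ x * Real.log x) (fun _ ↦ 1)
  have hcross := htrace (fun x ↦ x) Real.log
  have hρtr := htrace (fun x ↦ x) (fun _ ↦ 1)
  have hσtr := htrace (fun _ ↦ 1) (fun x ↦ x)
  rw [cfc_const_one ℝ σ hσ.isSelfAdjoint, Matrix.mul_one] at hentropy hρtr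
  rw [cfc_id_mul hρ] at hentropy
  rw [cfc_id' ℝ ρ hρ.isSelfAdjoint] at hcross hρtr
  rw [cfc_const_one ℝ ρ hρ.isSelfAdjoint, Matrix.one_mul,
    cfc_id' ℝ σ hσ.isSelfAdjoint] at hσtr
  rw [relEntropy, Matrix.mul_sub, trace_sub, map_sub, hentropy, hcross, hρtr, hσtr]
  simp only [← Finset.sum_sub_distrib]
  refine Finset.sum_congr rfl fun i _ ↦ Finset.sum_congr rfl fun k _ ↦ ?_
  obtain hw | hw := eq_or_ne (eigenOverlap hρ hσ i k) 0
  · simp only [hw, zero_mul, sub_self]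
  rw [← mul_log_sub_log_sub_eq_mul_klFun fun hk ↦ (mul_eq_zero.mp
    (eigenOverlap_mul_eigenvalues_eq_zero hρ hσ hsupp i hk)).resolve_left hw]
  ring

lemma eigenOverlap_mul_klFun_nonneg (hρ : ρ.PosSemidef) (hσ : σ.PosSemidef) (i k : n) :
    0 ≤ eigenOverlap hρ.isHermitian hσ.isHermitian i k * (hσ.isHermitian.eigenvalues k *
      InformationTheory.klFun (hρ.isHermitian.eigenvalues i / hσ.isHermitian.eigenvalues k)) :=
  mul_nonneg (eigenOverlap_nonneg _ _ i k) (mul_nonneg (hσ.eigenvalues_nonneg k)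
    (InformationTheory.klFun_nonneg (div_nonneg (hρ.eigenvalues_nonneg i)
      (hσ.eigenvalues_nonneg k))))

theorem re_trace_sub_re_trace_le_relEntropy (hρ : ρ.PosSemidef) (hσ : σ.PosSemidef)
    (hsupp : ρ * supportProj σ = ρ) :
    RCLike.re ρ.trace - RCLike.re σ.trace ≤ relEntropy ρ σ := by
  rw [← sub_nonneg, relEntropy_sub_eq_sum hρ.isHermitian hσ.isHermitian hsupp]
  exact Finset.sum_nonneg fun i _ ↦ Finset.sum_nonneg fun k _ ↦
    eigenOverlap_mul_klFun_nonneg hρ hσ i k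

theorem relEntropy_eq_re_trace_sub_re_trace_iff (hρ : ρ.PosSemidef) (hσ : σ.PosSemidef)
    (hsupp : ρ * supportProj σ = ρ) :
    relEntropy ρ σ = RCLike.re ρ.trace - RCLike.re σ.trace ↔ ρ = σ := by
  refine ⟨fun h ↦ ?_, fun h ↦ by rw [h, relEntropy_self, sub_self]⟩
  have hnonneg := eigenOverlap_mul_klFun_nonneg hρ hσ
  have hsum := relEntropy_sub_eq_sum hρ.isHermitian hσ.isHermitian hsupp
  rw [sub_eq_zero.mpr h, eq_comm,
    Fintype.sum_eq_zero_iff_of_nonneg fun i ↦ Finset.sum_nonneg fun k _ ↦ hnonneg i k] at hsum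
  refine eq_of_eigenOverlap_eq_zero_or_eigenvalues_eq hρ.isHermitian hσ.isHermitian fun i k ↦ ?_
  have hterm := congr_fun ((Fintype.sum_eq_zero_iff_of_nonneg (hnonneg i)).mp (congr_fun hsum i)) k
  obtain hw | hterm := mul_eq_zero.mp hterm
  · exact .inl hw
  obtain hs | hkl := mul_eq_zero.mp hterm
  · have hwp :=
      eigenOverlap_mul_eigenvalues_eq_zero hρ.isHermitian hσ.isHermitian hsupp i hs
    exact (mul_eq_zero.mp hwp).imp_right (·.trans hs.symm)
  · exact .inr (eq_of_div_eq_one ((InformationTheory.klFun_eq_zero_iff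
      (div_nonneg (hρ.eigenvalues_nonneg i) (hσ.eigenvalues_nonneg k))).mp hkl))

end RelativeEntropy

section MutualInformation

lemma re_trace_mul_cfc_log [Fintype n] [DecidableEq n] {A : Matrix n n ℂ} (hA : A.IsHermitian) :
    RCLike.re (A * cfc Real.log A).trace = -vnEntropy hA := by
  rw [← cfc_id_mul hA, trace_cfc hA, ← RCLike.ofReal_sum, RCLike.ofReal_re, vnEntropy, neg_neg]

variable [Fintype m] [DecidableEq m] [Fintype n] [DecidableEq n]
  {ρ : Matrix (m × n) (m × n) ℂ}

lemma relEntropy_kronecker_partialTrace (hρ : ρ.PosSemidef)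
    (h1 : (partialTraceRight ρ).IsHermitian) (h2 : (partialTraceLeft ρ).IsHermitian) :
    relEntropy ρ (partialTraceRight ρ ⊗ₖ partialTraceLeft ρ) =
      vnEntropy h1 + vnEntropy h2 - vnEntropy hρ.isHermitian := by
  set A := partialTraceRight ρ
  set B := partialTraceLeft ρ
  have hlogA : (ρ * (cfc Real.log A ⊗ₖ supportProj B)).trace = (A * cfc Real.log A).trace := by
    have hfactor : cfc Real.log A ⊗ₖ supportProj B =
        ((1 : Matrix m m ℂ) ⊗ₖ supportProj B) * (cfc Real.log A ⊗ₖ (1 : Matrix n n ℂ)) := by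
      rw [← mul_kronecker_mul, Matrix.one_mul, Matrix.mul_one]
    rw [hfactor, ← Matrix.mul_assoc, mul_one_kronecker_supportProj_partialTraceLeft hρ,
      trace_mul_kronecker_one]
  have hlogB : (ρ * (supportProj A ⊗ₖ cfc Real.log B)).trace = (B * cfc Real.log B).trace := by
    have hfactor : supportProj A ⊗ₖ cfc Real.log B =
        (supportProj A ⊗ₖ (1 : Matrix n n ℂ)) * ((1 : Matrix m m ℂ) ⊗ₖ cfc Real.log B) := by
      rw [← mul_kronecker_mul, Matrix.one_mul, Matrix.mul_one]
    rw [hfactor, ← Matrix.mul_assoc, mul_supportProj_partialTraceRight_kronecker_one hρ,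
      trace_mul_one_kronecker]
  rw [relEntropy, cfc_log_kronecker h1 h2, Matrix.mul_sub, Matrix.mul_add, trace_sub, trace_add,
    hlogA, hlogB, map_sub, map_add, re_trace_mul_cfc_log h1, re_trace_mul_cfc_log h2,
    re_trace_mul_cfc_log hρ.isHermitian]
  ring

theorem mutual_information_nonneg_general (hρ : ρ.PosSemidef) (htr : ρ.trace ≤ 1)
    (h1 : (partialTraceRight ρ).IsHermitian) (h2 : (partialTraceLeft ρ).IsHermitian) :
    0 ≤ vnEntropy h1 + vnEntropy h2 - vnEntropy hρ.isHermitian ∧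
      (vnEntropy h1 + vnEntropy h2 - vnEntropy hρ.isHermitian = 0 ↔
        ρ = partialTraceRight ρ ⊗ₖ partialTraceLeft ρ) := by
  rw [← relEntropy_kronecker_partialTrace hρ h1 h2]
  set σ := partialTraceRight ρ ⊗ₖ partialTraceLeft ρ with hσ_def
  have hσ : σ.PosSemidef :=
    (posSemidef_partialTraceRight hρ).kronecker (posSemidef_partialTraceLeft hρ)
  have hsupp : ρ * supportProj σ = ρ := mul_supportProj_kronecker_partialTrace hρ
  have htrσ : σ.trace = ρ.trace * ρ.trace := by
    rw [hσ_def, trace_kronecker, trace_partialTraceRight, trace_partialTraceLeft]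
  have hgap : 0 ≤ RCLike.re ρ.trace - RCLike.re σ.trace := by
    have hle : σ.trace ≤ ρ.trace := htrσ ▸ mul_le_of_le_one_right hρ.trace_nonneg htr
    exact sub_nonneg.mpr (RCLike.le_iff_re_im.mp hle).1
  have hklein := re_trace_sub_re_trace_le_relEntropy hρ hσ hsupp
  refine ⟨hgap.trans hklein, fun h ↦ ?_, fun h ↦ by rw [← h, relEntropy_self]⟩
  exact (relEntropy_eq_re_trace_sub_re_trace_iff hρ hσ hsupp).mp
    (hklein.antisymm' (h ▸ hgap))

end MutualInformation

theorem mutual_information_nonneg {d e : ℕ}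
    (ρ : Matrix (Fin d × Fin e) (Fin d × Fin e) ℂ)
    (hρ : ρ.PosSemidef) (htr : ρ.trace = 1)
    (h1 : (ptrace2 ρ).IsHermitian) (h2 : (ptrace1 ρ).IsHermitian) :
    0 ≤ vnEntropy h1 + vnEntropy h2 - vnEntropy hρ.1 ∧
    (vnEntropy h1 + vnEntropy h2 - vnEntropy hρ.1 = 0 ↔
      ρ = Matrix.kroneckerMap (· * ·) (ptrace2 ρ) (ptrace1 ρ)) :=
  mutual_information_nonneg_general hρ htr.le h1 h2
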